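/- arXiv:solv-int/9812001 — 2 statements merged into one kernel-verified Lean document; each statement's English description precedes it below -/
import Mathlib

section
/- Lax representation in parabolic coordinates. Let H = p_x² + p_y² and for λ ≠ 0 define the 2×2 matrices L(λ) = [[p_x + y·p_y/(2λ), λ − x − y²/(4λ)], [p_y²/λ, −(p_x + y·p_y/(2λ))]] and A = [[0,1],[0,0]]. Then for every λ ≠ 0 and every matrix entry (i,j), {H, L(λ)_{ij}} = ([A, L(λ)])_{ij}, where [A,L] = A·L − L·A. -/
/-- The canonical Poisson bracket of two functions of `(x, y, pₓ, p_y)` on `ℝ⁴`: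
`{F,G} = ∂F/∂pₓ·∂G/∂x − ∂F/∂x·∂G/∂pₓ + ∂F/∂p_y·∂G/∂y − ∂F/∂y·∂G/∂p_y`. -/
noncomputable def pb (F G : ℝ → ℝ → ℝ → ℝ → ℝ) (x y px py : ℝ) : ℝ :=
    deriv (fun s => F x y s py) px * deriv (fun s => G s y px py) x
  - deriv (fun s => F s y px py) x * deriv (fun s => G x y s py) px
  + deriv (fun s => F x y px s) py * deriv (fun s => G x s px py) y
  - deriv (fun s => F x s px py) y * deriv (fun s => G x y px s) py

/-- The Lax matrix of the free Stäckel system separable in parabolic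
coordinates, with spectral parameter `lam`. -/
noncomputable def L (lam x y px py : ℝ) : Matrix (Fin 2) (Fin 2) ℝ :=
  !![px + y * py / (2 * lam), lam - x - y ^ 2 / (4 * lam);
     py ^ 2 / lam, -(px + y * py / (2 * lam))]

/-- The second Lax matrix. -/
noncomputable def A : Matrix (Fin 2) (Fin 2) ℝ := !![0, 1; 0, 0]

/-- The free Hamiltonian `H = pₓ² + p_y²` in parabolic coordinates. -/
noncomputable def Ham : ℝ → ℝ → ℝ → ℝ → ℝ := fun _ _ px py => px ^ 2 + py ^ 2

/-!
Since `H` depends only on the momenta, `{H, ·}` is the first-order operator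
`2 pₓ ∂/∂x + 2 p_y ∂/∂y`. The matrix `L` is affine in `x`, with `∂L/∂x = -A`, and at most quadratic
in `y`. The commutator with `A` only sees the lower row and the difference of the diagonal
entries of `L`, so the Lax equation is a comparison of two explicit matrices.
-/

theorem pb_of_position_independent (T : ℝ → ℝ → ℝ) (G : ℝ → ℝ → ℝ → ℝ → ℝ) (x y px py : ℝ) :
    pb (fun _ _ px py => T px py) G x y px py =
      deriv (fun s => T s py) px * deriv (fun s => G s y px py) x
        + deriv (T px) py * deriv (fun s => G x s px py) y := by
  simp only [pb, deriv_const, zero_mul, sub_zero]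

theorem pb_Ham (G : ℝ → ℝ → ℝ → ℝ → ℝ) (x y px py : ℝ) :
    pb Ham G x y px py =
      2 * px * deriv (fun s => G s y px py) x + 2 * py * deriv (fun s => G x s px py) y := by
  have deriv_px : deriv (fun s : ℝ => s ^ 2 + py ^ 2) px = 2 * px := by simp
  have deriv_py : deriv (fun s : ℝ => px ^ 2 + s ^ 2) py = 2 * py := by simp
  unfold Ham
  rw [pb_of_position_independent, deriv_px, deriv_py]

theorem hasDerivAt_L_x (lam x y px py : ℝ) (i j : Fin 2) :
    HasDerivAt (fun s => L lam s y px py i j) ((-A) i j) x := by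
  have upper_right : HasDerivAt (fun s => lam - s - y ^ 2 / (4 * lam)) (-1) x :=
    ((hasDerivAt_id x).const_sub lam).sub_const _
  fin_cases i <;> fin_cases j <;>
    simp [L, A, upper_right, hasDerivAt_const]

theorem hasDerivAt_L_y (lam x y px py : ℝ) (i j : Fin 2) :
    HasDerivAt (fun s => L lam x s px py i j)
      (!![py / (2 * lam), -(y / (2 * lam)); 0, -(py / (2 * lam))] i j) y := by
  have upper_left : HasDerivAt (fun s => px + s * py / (2 * lam)) (py / (2 * lam)) y := by
    simpa using (((hasDerivAt_id y).mul_const py).div_const (2 * lam)).const_add px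
  have upper_right :
      HasDerivAt (fun s => lam - x - s ^ 2 / (4 * lam)) (-(y / (2 * lam))) y :=
    (((hasDerivAt_pow 2 y).div_const (4 * lam)).const_sub (lam - x)).congr_deriv (by
      push_cast
      ring)
  fin_cases i <;> fin_cases j
  · exact upper_left
  · exact upper_right
  · exact hasDerivAt_const y _
  · exact upper_left.neg

theorem commutator_raising_fin_two {R : Type*} [NonAssocRing R] (M : Matrix (Fin 2) (Fin 2) R) :
    !![0, 1; 0, 0] * M - M * !![0, 1; 0, 0] = !![M 1 0, M 1 1 - M 0 0; 0, -M 1 0] := by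
  ext i j
  fin_cases i <;> fin_cases j <;>
    simp [Matrix.mul_apply, Matrix.vecMul, dotProduct, Fin.sum_univ_two]

theorem commutator_A_L (lam x y px py : ℝ) :
    A * L lam x y px py - L lam x y px py * A =
      (2 * px) • (-A) +
        (2 * py) • !![py / (2 * lam), -(y / (2 * lam)); 0, -(py / (2 * lam))] := by
  rw [A, commutator_raising_fin_two]
  ext i j
  fin_cases i <;> fin_cases j <;>
    simp only [L, Fin.zero_eta, Fin.mk_one, Matrix.add_apply, Matrix.smul_apply, Matrix.neg_apply,
      Matrix.of_apply, Matrix.cons_val_zero, Matrix.cons_val_one, smul_eq_mul] <;>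
    ring

/-- Lax representation in parabolic coordinates: the Lax equation
`{H, L(λ)} = [A, L(λ)]` holds entrywise for every `λ ≠ 0`. -/
theorem lax_parabolic :
    ∀ (lam x y px py : ℝ), lam ≠ 0 → ∀ (i j : Fin 2),
      pb Ham (fun x y px py => L lam x y px py i j) x y px py =
        (A * L lam x y px py - L lam x y px py * A) i j := by
  intro lam x y px py _ i j
  rw [pb_Ham, (hasDerivAt_L_x lam x y px py i j).deriv, (hasDerivAt_L_y lam x y px py i j).deriv,
    commutator_A_L]
  simp only [Matrix.add_apply, Matrix.smul_apply, smul_eq_mul]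
end

section
/- Spectral curve and commuting integrals in parabolic coordinates. Let L(λ) = [[p_x + y·p_y/(2λ), λ − x − y²/(4λ)], [p_y²/λ, −(p_x + y·p_y/(2λ))]]. Then for every λ ≠ 0, −det L(λ) = H + J/λ, where H = p_x² + p_y² and J = p_y·(y·p_x − x·p_y); moreover {H, J} = 0. -/
/-- The second integral of motion `J = p_y(y pₓ − x p_y)`. -/
noncomputable def J : ℝ → ℝ → ℝ → ℝ → ℝ :=
  fun x y px py => py * (y * px - x * py)

/-!
`L(λ)` is traceless, so `−det L(λ)` is the square of its diagonal entry plus the product of its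
off-diagonal entries; the terms `± y² p_y² / (4λ²)` of these cancel, which leaves `H + J/λ`.

The integral `J` is the product of `p_y` and the angular momentum `y pₓ − x p_y`. As `H` depends on
the momenta alone, bracketing with `H` differentiates only in the positions, so the factor `p_y`
comes out of `{H, J}`; the other factor commutes with `H` because `H` is rotation invariant.
-/

theorem neg_det_fin_two_of_trace_eq_zero {R : Type*} [CommRing R]
    {A : Matrix (Fin 2) (Fin 2) R}
    (hA : A.trace = 0) : -A.det = A 0 0 ^ 2 + A 0 1 * A 1 0 := by
  have h11 : A 1 1 = -A 0 0 := eq_neg_of_add_eq_zero_right (A.trace_fin_two ▸ hA)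
  rw [A.det_fin_two, h11]
  ring

theorem trace_L (lam x y px py : ℝ) : (L lam x y px py).trace = 0 := by
  simp [L, Matrix.trace_fin_two]

theorem neg_det_L {lam : ℝ} (hlam : lam ≠ 0) (x y px py : ℝ) :
    -(L lam x y px py).det = Ham x y px py + J x y px py / lam :=
  calc -(L lam x y px py).det
    _ = (px + y * py / (2 * lam)) ^ 2 + (lam - x - y ^ 2 / (4 * lam)) * (py ^ 2 / lam) :=
      neg_det_fin_two_of_trace_eq_zero (trace_L lam x y px py)
    _ = px ^ 2 + py ^ 2 + py * (y * px - x * py) / lam := by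
      field_simp
      ring

/-- The angular momentum `y pₓ − x p_y` in the plane, with the sign with which it occurs in `J`
(opposite to the usual `x p_y − y pₓ`). -/
def angularMomentum (x y px py : ℝ) : ℝ :=
  y * px - x * py

theorem deriv_angularMomentum_fst (x y px py : ℝ) :
    deriv (fun s => angularMomentum s y px py) x = -py := by
  simp [angularMomentum]

theorem deriv_angularMomentum_snd (x y px py : ℝ) :
    deriv (fun s => angularMomentum x s px py) y = px := by
  simp [angularMomentum]

section MomentumFunction

variable (h : ℝ → ℝ → ℝ) (x y px py : ℝ)

theorem pb_momentum_left (F : ℝ → ℝ → ℝ → ℝ → ℝ) :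
    pb (fun _ _ p q => h p q) F x y px py =
      deriv (fun s => h s py) px * deriv (fun s => F s y px py) x +
        deriv (fun s => h px s) py * deriv (fun s => F x s px py) y := by
  simp [pb]

theorem pb_momentum_mul (g : ℝ → ℝ → ℝ) (F : ℝ → ℝ → ℝ → ℝ → ℝ) :
    pb (fun _ _ p q => h p q) (fun u v p q => g p q * F u v p q) x y px py =
      g px py * pb (fun _ _ p q => h p q) F x y px py := by
  simp only [pb_momentum_left, deriv_const_mul_field]
  ring

theorem pb_momentum_angularMomentum :
    pb (fun _ _ p q => h p q) angularMomentum x y px py =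
      px * deriv (fun s => h px s) py - py * deriv (fun s => h s py) px := by
  rw [pb_momentum_left, deriv_angularMomentum_fst, deriv_angularMomentum_snd]
  ring

end MomentumFunction

theorem pb_Ham_angularMomentum (x y px py : ℝ) : pb Ham angularMomentum x y px py = 0 :=
  calc pb Ham angularMomentum x y px py
    _ = px * deriv (fun s => px ^ 2 + s ^ 2) py - py * deriv (fun s => s ^ 2 + py ^ 2) px :=
      pb_momentum_angularMomentum (fun p q => p ^ 2 + q ^ 2) x y px py
    _ = px * (2 * py) - py * (2 * px) := by simp
    _ = 0 := by ring

theorem pb_Ham_J (x y px py : ℝ) : pb Ham J x y px py = 0 :=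
  calc pb Ham J x y px py
    _ = py * pb Ham angularMomentum x y px py :=
      pb_momentum_mul (fun p q => p ^ 2 + q ^ 2) x y px py (fun _ q => q) angularMomentum
    _ = 0 := by rw [pb_Ham_angularMomentum, mul_zero]

/-- Spectral curve and commuting integrals in parabolic coordinates:
`−det L(λ) = H + J/λ` for `λ ≠ 0`, and `{H, J} = 0`. -/
theorem spectral_curve_parabolic :
    (∀ lam x y px py : ℝ, lam ≠ 0 →
      -(L lam x y px py).det = Ham x y px py + J x y px py / lam) ∧
    (∀ x y px py : ℝ, pb Ham J x y px py = 0) :=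
  ⟨fun _ x y px py hlam => neg_det_L hlam x y px py, pb_Ham_J⟩
end
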